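/- For all reals K, d ≥ 1, all ε₁, ε₂ ∈ (0,1), and every graph G, at least one of the following holds: (i) there exists a subgraph H of G with v(H) ≤ 3Kd and e(H) ≥ ε₁·ε₂·d²/2, or (ii) G is (K, ε₁, ε₂, d)-unmated. -/

import Mathlib

/-!
If `G` is not unmated, some small vertex `v` has at least `ε₁ * d` mates. Choose a set `s` of
exactly `⌈ε₁ * d⌉₊` of them and let `H` be the subgraph induced on `s` and the neighbourhood of `v`.
Each vertex of `s` has degree at least `ε₂ * d` in `H`, so by the handshake identity `H` has at
least `ε₁ * ε₂ * d ^ 2 / 2` edges.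
-/

open SimpleGraph

/-- Two (distinct) vertices are `(ε, d)`-mates if they have at least `ε * d` common
neighbours. -/
def SimpleGraph.IsMate {V : Type*} (G : SimpleGraph V) (ε d : ℝ) (u v : V) : Prop :=
  u ≠ v ∧ ε * d ≤ (Nat.card ↥(G.neighborSet u ∩ G.neighborSet v) : ℝ)

/-- `G` is `(K, ε₁, ε₂, d)`-unmated if every `(K, d)`-small vertex (one of degree at most
`K * d`) has strictly fewer than `ε₁ * d` vertices that are its `(ε₂, d)`-mates. -/
def SimpleGraph.Unmated {V : Type*} (G : SimpleGraph V) (K ε₁ ε₂ d : ℝ) : Prop :=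
  ∀ v : V, (Nat.card (G.neighborSet v) : ℝ) ≤ K * d →
    (Nat.card {u : V | G.IsMate ε₂ d u v} : ℝ) < ε₁ * d

section Subgraph

variable {V : Type*} {G : SimpleGraph V}

theorem sum_verts_ncard_neighborSet (H : G.Subgraph) [Fintype H.verts] :
    ∑ v : H.verts, (H.neighborSet v).ncard = 2 * H.edgeSet.ncard := by
  classical
  have degree_eq (v : H.verts) [Fintype (H.coe.neighborSet v)] :
      H.coe.degree v = (H.neighborSet v).ncard := by
    have : Fintype (H.neighborSet v) := Fintype.ofFinite _
    rw [H.coe_degree, ← Subgraph.finset_card_neighborSet_eq_degree, Set.ncard_eq_toFinset_card']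
  have edges_eq : H.coe.edgeFinset.card = H.edgeSet.ncard := by
    rw [← H.image_coe_edgeSet_coe,
      Set.ncard_image_of_injective _ (Sym2.map.injective Subtype.val_injective),
      ← coe_edgeFinset, Set.ncard_coe_finset]
  simpa only [degree_eq, edges_eq] using H.coe.sum_degrees_eq_twice_card_edges

theorem sum_ncard_neighborSet_le (H : G.Subgraph) (hH : H.verts.Finite) (s : Finset V) :
    ∑ v ∈ s, (H.neighborSet v).ncard ≤ 2 * H.edgeSet.ncard := by
  have := hH.fintype
  have mem_verts (v : V) (hv : (H.neighborSet v).ncard ≠ 0) : v ∈ H.verts := by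
    obtain ⟨w, hw⟩ := Set.nonempty_of_ncard_ne_zero hv
    exact H.edge_vert hw
  calc ∑ v ∈ s, (H.neighborSet v).ncard
      ≤ ∑ v ∈ H.verts.toFinset, (H.neighborSet v).ncard :=
        Finset.sum_le_sum_of_ne_zero fun v _ hv ↦ Set.mem_toFinset.mpr (mem_verts v hv)
    _ = ∑ v : H.verts, (H.neighborSet v).ncard :=
        Finset.sum_subtype _ (fun _ ↦ Set.mem_toFinset) _
    _ = 2 * H.edgeSet.ncard := sum_verts_ncard_neighborSet H

theorem card_mul_le_two_mul_ncard_edgeSet_induce {s : Finset V} {t : Set V} (ht : t.Finite)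
    {c : ℝ} (hc : ∀ u ∈ s, c ≤ (G.neighborSet u ∩ t).ncard) :
    s.card * c ≤ 2 * ((⊤ : G.Subgraph).induce (s ∪ t)).edgeSet.ncard := by
  set H := (⊤ : G.Subgraph).induce (s ∪ t)
  have hH : H.verts.Finite := s.finite_toSet.union ht
  have le_degree (u : V) (hu : u ∈ s) : c ≤ (H.neighborSet u).ncard := by
    have inter_subset : G.neighborSet u ∩ t ⊆ H.neighborSet u :=
      fun w hw ↦ ⟨Or.inl hu, Or.inr hw.2, hw.1⟩
    have neighborSet_finite : (H.neighborSet u).Finite :=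
      hH.subset (H.neighborSet_subset_verts u)
    exact (hc u hu).trans (mod_cast Set.ncard_le_ncard inter_subset neighborSet_finite)
  calc s.card * c = s.card • c := (nsmul_eq_mul _ _).symm
    _ ≤ ∑ u ∈ s, ((H.neighborSet u).ncard : ℝ) := s.card_nsmul_le_sum _ _ le_degree
    _ ≤ 2 * H.edgeSet.ncard := mod_cast sum_ncard_neighborSet_le H hH s

end Subgraph

section Mates

variable {V : Type*} (G : SimpleGraph V) [G.LocallyFinite]

theorem finite_setOf_isMate {ε d : ℝ} (hεd : 0 < ε * d) (v : V) :
    {u : V | G.IsMate ε d u v}.Finite := by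
  have subset_iUnion : {u : V | G.IsMate ε d u v} ⊆ ⋃ w ∈ G.neighborSet v, G.neighborSet w := by
    rintro u ⟨-, hu⟩
    rw [Nat.card_coe_set_eq] at hu
    obtain ⟨w, huw, hvw⟩ : (G.neighborSet u ∩ G.neighborSet v).Nonempty :=
      Set.nonempty_of_ncard_ne_zero (mod_cast (hεd.trans_le hu).ne')
    exact Set.mem_biUnion hvw huw.symm
  exact ((G.neighborSet v).toFinite.biUnion fun w _ ↦ (G.neighborSet w).toFinite).subset
    subset_iUnion

theorem small_dense_or_unmated_general (K ε₁ : ℝ) {d ε₂ : ℝ} (hd : 0 < d) (hε₂ : 0 < ε₂) :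
    (∃ H : G.Subgraph, (Nat.card H.verts : ℝ) ≤ K * d + ⌈ε₁ * d⌉₊ ∧
        ε₁ * ε₂ * d ^ 2 / 2 ≤ (Nat.card H.edgeSet : ℝ)) ∨
    G.Unmated K ε₁ ε₂ d := by
  refine or_iff_not_imp_right.mpr fun not_unmated ↦ ?_
  simp only [SimpleGraph.Unmated, not_forall, not_lt, Nat.card_coe_set_eq] at not_unmated ⊢
  obtain ⟨v, v_small, many_mates⟩ := not_unmated
  obtain ⟨s, s_mates, s_card⟩ := Set.exists_subset_card_eq (Nat.ceil_le.mpr many_mates)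
  lift s to Finset V using (finite_setOf_isMate G (mul_pos hε₂ hd) v).subset s_mates
  rw [Set.ncard_coe_finset] at s_card
  refine ⟨(⊤ : G.Subgraph).induce (s ∪ G.neighborSet v), ?_, ?_⟩
  · calc ((s ∪ G.neighborSet v : Set V).ncard : ℝ)
        ≤ s.card + (G.neighborSet v).ncard := by
          rw [← Set.ncard_coe_finset s]
          exact_mod_cast Set.ncard_union_le ↑s (G.neighborSet v)
      _ ≤ K * d + ⌈ε₁ * d⌉₊ := by rw [s_card]; linarith
  · have common_neighbors (u : V) (hu : u ∈ s) :
        ε₂ * d ≤ (G.neighborSet u ∩ G.neighborSet v).ncard := by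
      simpa only [Nat.card_coe_set_eq] using (s_mates hu).2
    have card_ge : ε₁ * d ≤ s.card := s_card ▸ Nat.le_ceil _
    set H := (⊤ : G.Subgraph).induce (s ∪ G.neighborSet v)
    have : ε₁ * ε₂ * d ^ 2 ≤ 2 * H.edgeSet.ncard := calc
      ε₁ * ε₂ * d ^ 2 = ε₁ * d * (ε₂ * d) := by ring
      _ ≤ s.card * (ε₂ * d) := by gcongr
      _ ≤ 2 * H.edgeSet.ncard :=
        card_mul_le_two_mul_ncard_edgeSet_induce (G.neighborSet v).toFinite common_neighbors
    linarith

end Mates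

/-- For all reals `K, d ≥ 1`, all `ε₁, ε₂ ∈ (0,1)` and every graph `G`, either (i) `G` has a
subgraph `H` with `v(H) ≤ 3 K d` and `e(H) ≥ ε₁ ε₂ d² / 2`, or (ii) `G` is
`(K, ε₁, ε₂, d)`-unmated. -/
theorem small_dense_or_unmated (K d ε₁ ε₂ : ℝ) (hK : 1 ≤ K) (hd : 1 ≤ d)
    (hε₁ : ε₁ ∈ Set.Ioo (0 : ℝ) 1) (hε₂ : ε₂ ∈ Set.Ioo (0 : ℝ) 1)
    (V : Type) [Fintype V] (G : SimpleGraph V) :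
    (∃ H : G.Subgraph, (Nat.card H.verts : ℝ) ≤ 3 * K * d ∧
        ε₁ * ε₂ * d ^ 2 / 2 ≤ (Nat.card H.edgeSet : ℝ)) ∨
    G.Unmated K ε₁ ε₂ d := by
  classical
  have ceil_le : (⌈ε₁ * d⌉₊ : ℝ) ≤ 2 * K * d := by
    nlinarith [Nat.ceil_lt_add_one (mul_nonneg hε₁.1.le (zero_le_one.trans hd)), hε₁.2]
  exact (small_dense_or_unmated_general G K ε₁ (by linarith) hε₂.1).imp_left
    fun ⟨H, verts_le, edges_ge⟩ ↦ ⟨H, by linarith, edges_ge⟩
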